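/- arXiv:1903.08160 — 5 statements merged into one kernel-verified Lean document; each statement's English description precedes it below -/
import Mathlib

section
/- For a Tychonoff space X, the following are equivalent: (1) the bitopological function space (C(X), τ_k, τ_p) satisfies S₁(Ω^k_0, Ω^p_0), i.e., for every sequence (A_n) of subsets of C(X) each having the constant zero function 0 in its closure in C_k(X) but with 0 ∉ A_n, one can choose f_n ∈ A_n such that 0 lies in the closure of {f_n : n ∈ ℕ} in C_p(X); (2) X satisfies S₁(𝒦, Ω), i.e., for every sequence (𝒰_n) of open k-covers of X one can choose U_n ∈ 𝒰_n such that {U_n : n ∈ ℕ} is an ω-cover of X. -/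
open Set Filter Topology TopologicalSpace

universe u

/-- The topology of pointwise convergence on `C(X, ℝ)`. -/
def pointwiseTopology (X : Type u) [TopologicalSpace X] : TopologicalSpace C(X, ℝ) :=
  TopologicalSpace.induced (fun f : C(X, ℝ) => (f : X → ℝ)) Pi.topologicalSpace

/-- `𝒰` is an (open) k-cover of `X`: a nontrivial open cover such that every compact
subset of `X` is contained in some member of `𝒰`. -/
def IsKCover {X : Type u} [TopologicalSpace X] (𝒰 : Set (Set X)) : Prop :=
  (∀ U ∈ 𝒰, IsOpen U) ∧ ⋃₀ 𝒰 = Set.univ ∧ Set.univ ∉ 𝒰 ∧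
    ∀ K : Set X, IsCompact K → ∃ U ∈ 𝒰, K ⊆ U

/-- `𝒰` is an (open) ω-cover of `X`: a nontrivial open cover such that every finite
subset of `X` is contained in some member of `𝒰`. -/
def IsOmegaCover {X : Type u} [TopologicalSpace X] (𝒰 : Set (Set X)) : Prop :=
  (∀ U ∈ 𝒰, IsOpen U) ∧ ⋃₀ 𝒰 = Set.univ ∧ Set.univ ∉ 𝒰 ∧
    ∀ F : Set X, F.Finite → ∃ U ∈ 𝒰, F ⊆ U

/-- `𝒰` is an (open) γ-cover of `X`: an infinite open cover such that for every finite
subset `F` of `X`, all but finitely many members of `𝒰` contain `F`. -/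
def IsGammaCover {X : Type u} [TopologicalSpace X] (𝒰 : Set (Set X)) : Prop :=
  (∀ U ∈ 𝒰, IsOpen U) ∧ ⋃₀ 𝒰 = Set.univ ∧ 𝒰.Infinite ∧
    ∀ F : Set X, F.Finite → {U ∈ 𝒰 | ¬ F ⊆ U}.Finite

/-- `iw(X) = ℵ₀`: there is a second-countable Tychonoff space `Y` and a continuous
bijection (one-to-one and onto map) from `X` to `Y`. -/
def CountableIWeight (X : Type u) [TopologicalSpace X] : Prop :=
  ∃ (Y : Type u) (_ : TopologicalSpace Y), SecondCountableTopology Y ∧ T35Space Y ∧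
    ∃ f : X → Y, Continuous f ∧ Function.Bijective f

/-- The selection principle `S₁(𝒜, ℬ)`. -/
def S1sel {α : Type u} (𝒜 ℬ : Set (Set α)) : Prop :=
  ∀ A : ℕ → Set α, (∀ n, A n ∈ 𝒜) →
    ∃ b : ℕ → α, (∀ n, b n ∈ A n) ∧ Set.range b ∈ ℬ

/-- The selection principle `S_fin(𝒜, ℬ)`. -/
def SfinSel {α : Type u} (𝒜 ℬ : Set (Set α)) : Prop :=
  ∀ A : ℕ → Set α, (∀ n, A n ∈ 𝒜) →
    ∃ B : ℕ → Set α, (∀ n, (B n).Finite ∧ B n ⊆ A n) ∧ (⋃ n, B n) ∈ ℬ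

/-- A strategy for player ONE in the game `G₁(𝒜, ℬ)` (a function from finite sequences
of TWO's moves to sets) is winning if it always plays members of `𝒜` and ONE wins every
play in which he follows it. -/
def IsWinningStrategyOneG1 {α : Type u} (𝒜 ℬ : Set (Set α)) (σ : List α → Set α) : Prop :=
  (∀ h : List α, σ h ∈ 𝒜) ∧
    ∀ b : ℕ → α, (∀ n, b n ∈ σ (List.ofFn fun i : Fin n => b i)) → Set.range b ∉ ℬ

/-- A strategy for player ONE in the game `G_fin(𝒜, ℬ)` (a function from finite sequences
of TWO's moves, which are finite subsets, to sets) is winning if it always plays members of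
`𝒜` and ONE wins every play in which he follows it. -/
def IsWinningStrategyOneGfin {α : Type u} (𝒜 ℬ : Set (Set α)) (σ : List (Set α) → Set α) :
    Prop :=
  (∀ h : List (Set α), σ h ∈ 𝒜) ∧
    ∀ B : ℕ → Set α,
      (∀ n, (B n).Finite ∧ B n ⊆ σ (List.ofFn fun i : Fin n => B i)) → (⋃ n, B n) ∉ ℬ

/-- `A ⊆ C(X, ℝ)` is sequentially dense in `C_p(X)`: every continuous function is the
pointwise limit of a sequence from `A`. -/
def SeqDenseP (X : Type u) [TopologicalSpace X] (A : Set C(X, ℝ)) : Prop :=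
  ∀ g : C(X, ℝ), ∃ s : ℕ → C(X, ℝ), (∀ n, s n ∈ A) ∧
    Filter.Tendsto s Filter.atTop (@nhds _ (pointwiseTopology X) g)

/-- The family `Ω^k_0` of subsets of `C(X, ℝ)` not containing `0` but having `0` in their
closure with respect to the compact-open topology. -/
def OmegaKZero (X : Type u) [TopologicalSpace X] (A : Set C(X, ℝ)) : Prop :=
  (0 : C(X, ℝ)) ∉ A ∧ (0 : C(X, ℝ)) ∈ closure A

/-- The family `Ω^p_0` of subsets of `C(X, ℝ)` not containing `0` but having `0` in their
closure with respect to the topology of pointwise convergence. -/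
def OmegaPZero (X : Type u) [TopologicalSpace X] (A : Set C(X, ℝ)) : Prop :=
  (0 : C(X, ℝ)) ∉ A ∧ (0 : C(X, ℝ)) ∈ @closure _ (pointwiseTopology X) A

/-- The family `Γ^p_0` of infinite subsets `A` of `C(X, ℝ)` with `0 ∉ A` such that every
neighborhood of `0` in the topology of pointwise convergence contains all but finitely
many elements of `A`. -/
def GammaPZero (X : Type u) [TopologicalSpace X] (A : Set C(X, ℝ)) : Prop :=
  A.Infinite ∧ (0 : C(X, ℝ)) ∉ A ∧
    ∀ N ∈ @nhds _ (pointwiseTopology X) (0 : C(X, ℝ)), {f ∈ A | f ∉ N}.Finite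

/-!
A continuous function equal to `1` off an open set `U` is less than `1` in absolute value only at
points of `U`. Conversely a function `f` and a radius `ε` give the open set `f ⁻¹' ball 0 ε`. Under
this dictionary k-covers correspond to sets of functions accumulating at `0` in the compact-open
topology, and ω-covers to the same for the pointwise topology. The radii must shrink along the
sequence, which costs nothing because every finite set lies in infinitely many terms of a sequence
enumerating an ω-cover. The dictionary breaks down only where some `f ⁻¹' ball 0 ε` is the whole
space, and there `f` is uniformly `ε`-small, so choosing these `f` infinitely often suffices.
-/

open Metric

theorem S1sel.exists_eventually_mem {α : Type u} {𝒜 ℬ : Set (Set α)} (h : S1sel 𝒜 ℬ)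
    {A : ℕ → Set α} (hA : ∀ᶠ n in atTop, A n ∈ 𝒜) :
    ∃ b : ℕ → α, (∀ᶠ n in atTop, b n ∈ A n) ∧ range b ∈ ℬ := by
  obtain ⟨N, hN⟩ := eventually_atTop.mp hA
  obtain ⟨b, hbA, hbℬ⟩ := h (fun n => A (max n N)) fun n => hN _ (le_max_right n N)
  refine ⟨b, ?_, hbℬ⟩
  filter_upwards [eventually_ge_atTop N] with n hn
  simpa only [max_eq_left hn] using hbA n

section Covers

variable {X : Type u} [TopologicalSpace X] {𝒰 : Set (Set X)}

theorem isOmegaCover_iff :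
    IsOmegaCover 𝒰 ↔ (∀ U ∈ 𝒰, IsOpen U) ∧ univ ∉ 𝒰 ∧
      ∀ F : Set X, F.Finite → ∃ U ∈ 𝒰, F ⊆ U := by
  refine ⟨fun ⟨hopen, _, huniv, hsub⟩ => ⟨hopen, huniv, hsub⟩, fun ⟨hopen, huniv, hsub⟩ =>
    ⟨hopen, sUnion_eq_univ_iff.mpr fun x => ?_, huniv, hsub⟩⟩
  simpa only [singleton_subset_iff] using hsub {x} (finite_singleton x)

theorem isKCover_iff :
    IsKCover 𝒰 ↔ (∀ U ∈ 𝒰, IsOpen U) ∧ univ ∉ 𝒰 ∧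
      ∀ K : Set X, IsCompact K → ∃ U ∈ 𝒰, K ⊆ U := by
  refine ⟨fun ⟨hopen, _, huniv, hsub⟩ => ⟨hopen, huniv, hsub⟩, fun ⟨hopen, huniv, hsub⟩ =>
    ⟨hopen, sUnion_eq_univ_iff.mpr fun x => ?_, huniv, hsub⟩⟩
  simpa only [singleton_subset_iff] using hsub {x} isCompact_singleton

theorem IsOmegaCover.frequently_cofinite_subset {ι : Type*} {U : ι → Set X}
    (hU : IsOmegaCover (range U)) {F : Set X} (hF : F.Finite) :
    ∃ᶠ i in cofinite, F ⊆ U i := by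
  obtain ⟨-, huniv, hsub⟩ := isOmegaCover_iff.mp hU
  have hmiss : ∀ i, ∃ x, x ∉ U i := fun i =>
    (ne_univ_iff_exists_notMem _).mp fun hi => huniv ⟨i, hi⟩
  choose p hp using hmiss
  refine frequently_cofinite_iff_infinite.mpr fun hfin => ?_
  -- Adding to `F` a point missed by each `U i ⊇ F` leaves no `U i` that could contain the result.
  obtain ⟨_, ⟨i, rfl⟩, hi⟩ := hsub (F ∪ p '' {i | F ⊆ U i}) (hF.union (hfin.image p))
  obtain ⟨hFi, hpi⟩ := union_subset_iff.mp hi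
  exact hp i (hpi (mem_image_of_mem p hFi))

end Covers

theorem mem_closure_compactOpen_iff {X Y : Type*} [TopologicalSpace X] [PseudoMetricSpace Y]
    {A : Set C(X, Y)} {f : C(X, Y)} :
    f ∈ closure A ↔
      ∀ K : Set X, IsCompact K → ∀ ε > 0, ∃ g ∈ A, ∀ x ∈ K, dist (g x) (f x) < ε := by
  have hbasis := nhds_basis_uniformity
    (uniformity_basis_dist (α := Y)).compactConvergenceUniformity (x := f) (α := C(X, Y))
  simp only [mem_closure_iff_nhds_basis hbasis, Prod.forall, and_imp, mem_ofPred_eq]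
  exact forall_congr' fun K => forall_comm

theorem mem_closure_pointwiseTopology_iff {X : Type u} [TopologicalSpace X] {A : Set C(X, ℝ)}
    {f : C(X, ℝ)} :
    f ∈ @closure _ (pointwiseTopology X) A ↔
      ∀ F : Set X, F.Finite → ∀ ε > 0, ∃ g ∈ A, ∀ x ∈ F, dist (g x) (f x) < ε := by
  have hbasis : (@nhds _ (pointwiseTopology X) f).HasBasis
      (fun p : Set X × (X → ℝ) => p.1.Finite ∧ ∀ x ∈ p.1, 0 < p.2 x)
      fun p => {g | ∀ x ∈ p.1, dist (g x) (f x) < p.2 x} := by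
    rw [pointwiseTopology, nhds_induced, nhds_pi]
    exact (hasBasis_pi fun x => nhds_basis_ball (x := f x)).comap _
  rw [@mem_closure_iff_nhds_basis _ (pointwiseTopology X) _ _ _ _ _ hbasis]
  refine ⟨fun h F hF ε hε => h (F, fun _ => ε) ⟨hF, fun _ _ => hε⟩, ?_⟩
  rintro h ⟨F, r⟩ ⟨hF, hr⟩
  have hradius : ∀ᶠ ε in 𝓝[>] (0 : ℝ), ∀ x ∈ F, ε < r x :=
    (eventually_all_finite hF).mpr fun x hx => nhdsWithin_le_nhds (gt_mem_nhds (hr x hx))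
  obtain ⟨ε, hεr, hε⟩ := (hradius.and self_mem_nhdsWithin).exists
  obtain ⟨g, hg, hgF⟩ := h F hF ε hε
  exact ⟨g, hg, fun x hx => (hgF x hx).trans (hεr x hx)⟩

section FunctionsFromCovers

theorem exists_continuousMap_zero_one_of_isCompact_subset {X : Type*} [TopologicalSpace X]
    [CompletelyRegularSpace X] {K U : Set X} (hK : IsCompact K) (hU : IsOpen U) (hKU : K ⊆ U) :
    ∃ f : C(X, ℝ), EqOn f 0 K ∧ EqOn f 1 Uᶜ := by
  obtain ⟨V, hV, rfl⟩ := isInducing_stoneCechUnit.isOpen_iff.mp hU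
  obtain ⟨g, hg0, hg1, -⟩ := exists_continuous_zero_one_of_isClosed
    (hK.image continuous_stoneCechUnit).isClosed hV.isClosed_compl
    (disjoint_compl_right_iff_subset.mpr (image_subset_iff.mpr hKU))
  exact ⟨g.comp ⟨stoneCechUnit, continuous_stoneCechUnit⟩,
    fun x hx => hg0 (mem_image_of_mem _ hx), fun x hx => hg1 hx⟩

variable {X : Type u} [TopologicalSpace X]

/-- The functions witnessing a cover `𝒰`: those equal to `1` off some member of `𝒰`. -/
def functionsOneOff (𝒰 : Set (Set X)) : Set C(X, ℝ) :=
  {f | ∃ U ∈ 𝒰, EqOn f 1 Uᶜ}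

theorem preimage_ball_zero_one_subset_of_eqOn_compl {X : Type*} {f : X → ℝ} {U : Set X}
    (hf : EqOn f 1 Uᶜ) : f ⁻¹' ball 0 1 ⊆ U := by
  intro x hx
  by_contra hxU
  simp [hf hxU] at hx

theorem IsKCover.omegaKZero_functionsOneOff [CompletelyRegularSpace X] {𝒰 : Set (Set X)}
    (h𝒰 : IsKCover 𝒰) : OmegaKZero X (functionsOneOff 𝒰) := by
  obtain ⟨hopen, huniv, hsub⟩ := isKCover_iff.mp h𝒰
  refine ⟨?_, mem_closure_compactOpen_iff.mpr fun K hK ε hε => ?_⟩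
  · rintro ⟨U, hU, hU1⟩
    have hU_univ : U = univ := univ_subset_iff.mp fun x _ =>
      preimage_ball_zero_one_subset_of_eqOn_compl hU1 (by simp)
    exact huniv (hU_univ ▸ hU)
  · obtain ⟨U, hU, hKU⟩ := hsub K hK
    obtain ⟨f, hf0, hf1⟩ := exists_continuousMap_zero_one_of_isCompact_subset hK (hopen U hU) hKU
    exact ⟨f, ⟨U, hU, hf1⟩, fun x hx => by simpa [hf0 hx] using hε⟩

theorem isOmegaCover_range_of_zero_mem_closure {ι : Type*} {U : ι → Set X} {f : ι → C(X, ℝ)}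
    (hopen : ∀ i, IsOpen (U i)) (hne : ∀ i, U i ≠ univ) (hfU : ∀ i, EqOn (f i) 1 (U i)ᶜ)
    (hf : (0 : C(X, ℝ)) ∈ @closure _ (pointwiseTopology X) (range f)) :
    IsOmegaCover (range U) := by
  refine isOmegaCover_iff.mpr ⟨forall_mem_range.mpr hopen, fun ⟨i, hi⟩ => hne i hi,
    fun F hF => ?_⟩
  obtain ⟨_, ⟨i, rfl⟩, hi⟩ := mem_closure_pointwiseTopology_iff.mp hf F hF 1 one_pos
  exact ⟨U i, mem_range_self i, fun x hx =>
    preimage_ball_zero_one_subset_of_eqOn_compl (hfU i) (hi x hx)⟩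

theorem S1sel.kCover_omegaCover_of_closure [CompletelyRegularSpace X]
    (h : S1sel {A : Set C(X, ℝ) | OmegaKZero X A}
      {A : Set C(X, ℝ) | (0 : C(X, ℝ)) ∈ @closure _ (pointwiseTopology X) A}) :
    S1sel {𝒰 : Set (Set X) | IsKCover 𝒰} {𝒰 : Set (Set X) | IsOmegaCover 𝒰} := by
  intro 𝒰 h𝒰
  obtain ⟨f, hf, hf0⟩ := h (fun n => functionsOneOff (𝒰 n)) fun n =>
    (h𝒰 n).omegaKZero_functionsOneOff
  choose U hU hfU using hf
  refine ⟨U, hU, isOmegaCover_range_of_zero_mem_closure (fun n => (h𝒰 n).1 _ (hU n)) ?_ hfU hf0⟩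
  exact fun n hn => (isKCover_iff.mp (h𝒰 n)).2.1 (hn ▸ hU n)

end FunctionsFromCovers

section CoversFromFunctions

variable {X : Type u} [TopologicalSpace X]

/-- The sets on which the individual members of `A` are smaller than `ε` in absolute value;
these are the candidate covers attached to a set of functions accumulating at `0`. -/
def zeroBallPreimages (A : Set C(X, ℝ)) (ε : ℝ) : Set (Set X) :=
  (fun f : C(X, ℝ) => f ⁻¹' ball 0 ε) '' A

theorem isKCover_zeroBallPreimages {A : Set C(X, ℝ)} {ε : ℝ} (hA : (0 : C(X, ℝ)) ∈ closure A)
    (hε : 0 < ε) (huniv : univ ∉ zeroBallPreimages A ε) : IsKCover (zeroBallPreimages A ε) := by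
  refine isKCover_iff.mpr ⟨?_, huniv, fun K hK => ?_⟩
  · rintro _ ⟨f, -, rfl⟩
    exact isOpen_ball.preimage f.continuous
  · obtain ⟨f, hf, hfK⟩ := mem_closure_compactOpen_iff.mp hA K hK ε hε
    exact ⟨_, mem_image_of_mem _ hf, hfK⟩

theorem exists_selection_zero_mem_closure_of_frequently {A : ℕ → Set C(X, ℝ)}
    (hA : ∀ n, (A n).Nonempty) {ε : ℕ → ℝ} (hε : Tendsto ε atTop (𝓝 0)) {U : ℕ → Set X}
    (hU : ∀ F : Set X, F.Finite → ∃ᶠ n in atTop, U n ∈ zeroBallPreimages (A n) (ε n) ∧ F ⊆ U n) :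
    ∃ f : ℕ → C(X, ℝ), (∀ n, f n ∈ A n) ∧
      (0 : C(X, ℝ)) ∈ @closure _ (pointwiseTopology X) (range f) := by
  have hselect : ∀ n, ∃ f ∈ A n, U n ∈ zeroBallPreimages (A n) (ε n) →
      f ⁻¹' ball 0 (ε n) = U n := fun n => by
    by_cases hn : U n ∈ zeroBallPreimages (A n) (ε n)
    · obtain ⟨f, hf, hfU⟩ := hn
      exact ⟨f, hf, fun _ => hfU⟩
    · obtain ⟨f, hf⟩ := hA n
      exact ⟨f, hf, fun h => absurd h hn⟩
  choose f hf hfU using hselect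
  refine ⟨f, hf, mem_closure_pointwiseTopology_iff.mpr fun F hF δ hδ => ?_⟩
  obtain ⟨n, ⟨hUn, hFU⟩, hεδ⟩ :=
    ((hU F hF).and_eventually (hε.eventually (gt_mem_nhds hδ))).exists
  have hFf : F ⊆ f n ⁻¹' ball 0 (ε n) := hFU.trans_eq (hfU n hUn).symm
  exact ⟨f n, mem_range_self n, fun x hx => (mem_ball.mp (hFf hx)).trans hεδ⟩

theorem S1sel.exists_frequently_mem_zeroBallPreimages
    (h : S1sel {𝒰 : Set (Set X) | IsKCover 𝒰} {𝒰 : Set (Set X) | IsOmegaCover 𝒰})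
    {A : ℕ → Set C(X, ℝ)} (hA : ∀ n, (0 : C(X, ℝ)) ∈ closure (A n)) {ε : ℕ → ℝ}
    (hε : ∀ n, 0 < ε n) :
    ∃ U : ℕ → Set X, ∀ F : Set X, F.Finite →
      ∃ᶠ n in atTop, U n ∈ zeroBallPreimages (A n) (ε n) ∧ F ⊆ U n := by
  by_cases huniv : ∃ᶠ n in atTop, univ ∈ zeroBallPreimages (A n) (ε n)
  · exact ⟨fun _ => univ, fun F _ => huniv.mono fun n hn => ⟨hn, subset_univ F⟩⟩
  have hcover : ∀ᶠ n in atTop, IsKCover (zeroBallPreimages (A n) (ε n)) :=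
    (not_frequently.mp huniv).mono fun n hn => isKCover_zeroBallPreimages (hA n) (hε n) hn
  obtain ⟨U, hUA, hUcover⟩ := h.exists_eventually_mem hcover
  refine ⟨U, fun F hF => hUA.and_frequently ?_⟩
  exact Nat.cofinite_eq_atTop ▸ IsOmegaCover.frequently_cofinite_subset hUcover hF

theorem S1sel.closure_of_kCover_omegaCover
    (h : S1sel {𝒰 : Set (Set X) | IsKCover 𝒰} {𝒰 : Set (Set X) | IsOmegaCover 𝒰}) :
    S1sel {A : Set C(X, ℝ) | OmegaKZero X A}
      {A : Set C(X, ℝ) | (0 : C(X, ℝ)) ∈ @closure _ (pointwiseTopology X) A} := by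
  intro A hA
  obtain ⟨U, hU⟩ := h.exists_frequently_mem_zeroBallPreimages (fun n => (hA n).2)
    fun n => Nat.one_div_pos_of_nat (α := ℝ) (n := n)
  exact exists_selection_zero_mem_closure_of_frequently
    (fun n => closure_nonempty_iff.mp ⟨0, (hA n).2⟩) tendsto_one_div_add_atTop_nhds_zero_nat hU

end CoversFromFunctions

theorem statement0_general (X : Type u) [TopologicalSpace X] [CompletelyRegularSpace X] :
    S1sel {A : Set C(X, ℝ) | OmegaKZero X A}
      {A : Set C(X, ℝ) | (0 : C(X, ℝ)) ∈ @closure _ (pointwiseTopology X) A} ↔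
    S1sel {𝒰 : Set (Set X) | IsKCover 𝒰} {𝒰 : Set (Set X) | IsOmegaCover 𝒰} :=
  ⟨S1sel.kCover_omegaCover_of_closure, S1sel.closure_of_kCover_omegaCover⟩

theorem statement0 (X : Type u) [TopologicalSpace X] [T35Space X] :
    S1sel {A : Set C(X, ℝ) | OmegaKZero X A}
      {A : Set C(X, ℝ) | (0 : C(X, ℝ)) ∈ @closure _ (pointwiseTopology X) A} ↔
    S1sel {𝒰 : Set (Set X) | IsKCover 𝒰} {𝒰 : Set (Set X) | IsOmegaCover 𝒰} :=
  statement0_general X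
end

section
/- For a Tychonoff space X, the space C_k(X) of continuous real-valued functions with the compact-open topology is separable if and only if iw(X) = ℵ₀, i.e., if and only if there exist a second-countable Tychonoff space Y and a continuous injective map from X onto Y. -/
open Set Filter Topology TopologicalSpace

universe u

/-!
A countable dense subset of `C(X, ℝ)` separates points, so evaluation maps `X` continuously and
injectively into a countable power of `ℝ`. Conversely, for a continuous injection of `X` into a
separable metric space, pulling back the distances to the points of a countable dense set gives
countably many functions separating the points of `X`. The real algebra they generate is dense by
the Stone–Weierstrass theorem, and it lies in the closure of the *rational* algebra they generate,
which is countable.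
-/

theorem adjoin_subset_closure_adjoin_of_denseRange {K L A : Type*} [CommSemiring K]
    [CommSemiring L] [TopologicalSpace L] [Semiring A] [TopologicalSpace A]
    [IsTopologicalSemiring A] [Algebra K L] [Algebra K A] [Algebra L A] [IsScalarTower K L A]
    [ContinuousSMul L A] (hKL : DenseRange (algebraMap K L)) (S : Set A) :
    (Algebra.adjoin L S : Set A) ⊆ closure (Algebra.adjoin K S : Set A) := by
  intro a ha
  change a ∈ (Algebra.adjoin K S).topologicalClosure
  induction ha using Algebra.adjoin_induction with
  | mem s hs => exact Subalgebra.le_topologicalClosure _ (Algebra.subset_adjoin hs)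
  | algebraMap l =>
    refine map_mem_closure (continuous_algebraMap L A) (hKL l) ?_
    rintro _ ⟨k, rfl⟩
    rw [← IsScalarTower.algebraMap_apply K L A]
    exact (Algebra.adjoin K S).algebraMap_mem k
  | add a b _ _ ha hb => exact add_mem ha hb
  | mul a b _ _ ha hb => exact mul_mem ha hb

theorem countable_adjoin {R A : Type*} [CommSemiring R] [Countable R] [Semiring A] [Algebra R A]
    {S : Set A} (hS : S.Countable) : (Algebra.adjoin R S : Set A).Countable := by
  have := hS.to_subtype
  rw [← countable_coe_iff, ← Cardinal.mk_le_aleph0_iff, ← Cardinal.lift_le_aleph0]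
  refine (Algebra.lift_cardinalMk_adjoin_le R S).trans ?_
  simp

theorem separableSpace_of_dense_adjoin {A : Type*} [Semiring A] [TopologicalSpace A]
    [IsTopologicalSemiring A] [Algebra ℝ A] [ContinuousSMul ℝ A] {S : Set A}
    (hS : S.Countable) (hdense : Dense (Algebra.adjoin ℝ S : Set A)) : SeparableSpace A := by
  let _ : Algebra ℚ A := Algebra.compHom A (algebraMap ℚ ℝ)
  have : IsScalarTower ℚ ℝ A := .of_algebraMap_eq' rfl
  have hsub : (Algebra.adjoin ℝ S : Set A) ⊆ closure (Algebra.adjoin ℚ S : Set A) :=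
    adjoin_subset_closure_adjoin_of_denseRange Rat.denseRange_cast S
  exact ⟨Algebra.adjoin ℚ S, countable_adjoin hS, (hdense.mono hsub).of_closure⟩

section CompactOpen

variable {X : Type*} [TopologicalSpace X]

theorem continuous_continuousMap_prodMk {Y Z : Type*} [UniformSpace Y] [UniformSpace Z] :
    Continuous fun p : C(X, Y) × C(X, Z) => p.1.prodMk p.2 := by
  refine continuous_iff_continuousAt.2 fun p =>
    ContinuousMap.tendsto_iff_forall_isCompact_tendstoUniformlyOn.2 fun K hK => ?_
  have hfst := ContinuousMap.tendsto_iff_forall_isCompact_tendstoUniformlyOn.1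
    (tendsto_id (x := 𝓝 p.1)) K hK
  have hsnd := ContinuousMap.tendsto_iff_forall_isCompact_tendstoUniformlyOn.1
    (tendsto_id (x := 𝓝 p.2)) K hK
  rw [nhds_prod_eq]
  exact hfst.prodMk hsnd

instance isTopologicalRing_continuousMap {R : Type*} [TopologicalSpace R] [NonUnitalNonAssocRing R]
    [IsTopologicalRing R] : IsTopologicalRing C(X, R) where
  continuous_mul := by
    let _ : UniformSpace R := IsTopologicalAddGroup.rightUniformSpace R
    exact (ContinuousMap.continuous_postcomp ⟨fun q : R × R => q.1 * q.2, continuous_mul⟩).comp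
      continuous_continuousMap_prodMk

theorem dense_of_subalgebra_separatesPoints {A : Subalgebra ℝ C(X, ℝ)} (hA : A.SeparatesPoints) :
    Dense (A : Set C(X, ℝ)) := by
  intro f
  rw [UniformSpace.mem_closure_iff_ball]
  intro V hV
  obtain ⟨⟨K, ε⟩, ⟨hK, hε⟩, hsub⟩ :=
    (Metric.uniformity_basis_dist (α := ℝ)).compactConvergenceUniformity.mem_iff.1 hV
  obtain ⟨g, hgA, hg⟩ :=
    ContinuousMap.exists_mem_subalgebra_near_continuous_of_isCompact_of_separatesPoints
      hA f hK hε
  refine ⟨g, hsub fun x hx => ?_, hgA⟩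
  rw [mem_ofPred_eq, dist_comm, dist_eq_norm]
  exact hg x hx

theorem separableSpace_of_countable_separatesPoints {S : Set C(X, ℝ)} (hS : S.Countable)
    (hsep : ((fun f : C(X, ℝ) => (f : X → ℝ)) '' S).SeparatesPoints) :
    SeparableSpace C(X, ℝ) := by
  have hadjoin : (Algebra.adjoin ℝ S).SeparatesPoints := fun _ _ hxy =>
    let ⟨f, hf, hfxy⟩ := hsep hxy
    ⟨f, image_mono Algebra.subset_adjoin hf, hfxy⟩
  exact separableSpace_of_dense_adjoin hS (dense_of_subalgebra_separatesPoints hadjoin)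

theorem separatesPoints_of_dense {Y : Type*} [TopologicalSpace Y] [T2Space Y]
    (hX : {f : X → Y | Continuous f}.SeparatesPoints) {D : Set C(X, Y)} (hD : Dense D) :
    ((fun f : C(X, Y) => (f : X → Y)) '' D).SeparatesPoints := by
  intro x y hxy
  obtain ⟨f, hf, hfxy⟩ := hX hxy
  have hopen : IsOpen {g : C(X, Y) | g x ≠ g y} :=
    isOpen_ne_fun (continuous_eval_const x) (continuous_eval_const y)
  obtain ⟨g, hgD, hgxy⟩ := hD.exists_mem_open hopen ⟨⟨f, hf⟩, hfxy⟩
  exact ⟨g, mem_image_of_mem _ hgD, hgxy⟩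

end CompactOpen

theorem exists_countable_separatesPoints_of_metrizable (Y : Type*) [TopologicalSpace Y]
    [MetrizableSpace Y] [SeparableSpace Y] :
    ∃ S : Set C(Y, ℝ), S.Countable ∧
      ((fun f : C(Y, ℝ) => (f : Y → ℝ)) '' S).SeparatesPoints := by
  let _ := metrizableSpaceMetric Y
  obtain ⟨D, hDc, hD⟩ := exists_countable_dense Y
  let distTo (a : Y) : C(Y, ℝ) := ⟨fun y => dist y a, by fun_prop⟩
  refine ⟨distTo '' D, hDc.image distTo, fun x y hxy => ?_⟩
  obtain ⟨a, haD, hxa⟩ := hD.exists_dist_lt x (half_pos (dist_pos.2 hxy))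
  have hlt : dist x a < dist y a := by linarith [dist_triangle_right x y a]
  exact ⟨distTo a, mem_image_of_mem _ (mem_image_of_mem _ haD), hlt.ne⟩

theorem countableIWeight_iff_exists_countable_separatesPoints {X : Type u} [TopologicalSpace X] :
    CountableIWeight X ↔ ∃ S : Set C(X, ℝ), S.Countable ∧
      ((fun f : C(X, ℝ) => (f : X → ℝ)) '' S).SeparatesPoints := by
  constructor
  · rintro ⟨Y, _, _, _, f, hf, hbij⟩
    obtain ⟨S, hSc, hS⟩ := exists_countable_separatesPoints_of_metrizable Y
    let pullback (g : C(Y, ℝ)) : C(X, ℝ) := g.comp ⟨f, hf⟩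
    refine ⟨pullback '' S, hSc.image pullback, fun x y hxy => ?_⟩
    obtain ⟨_, ⟨g, hgS, rfl⟩, hgxy⟩ := hS (hbij.injective.ne hxy)
    exact ⟨pullback g, mem_image_of_mem _ (mem_image_of_mem _ hgS), hgxy⟩
  · rintro ⟨S, hSc, hS⟩
    have := hSc.to_subtype
    let eval (x : X) (f : S) : ℝ := f.1 x
    have heval : Continuous eval := continuous_pi fun f => f.1.continuous
    have hinj : Function.Injective eval := by
      intro x y hxy
      by_contra hne
      obtain ⟨_, ⟨f, hfS, rfl⟩, hfxy⟩ := hS hne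
      exact hfxy (congrFun hxy ⟨f, hfS⟩)
    exact ⟨range eval, inferInstance, inferInstance, inferInstance, rangeFactorization eval,
      heval.rangeFactorization, rangeFactorization_injective.2 hinj,
      rangeFactorization_surjective⟩

theorem statement2_general (X : Type u) [TopologicalSpace X]
    (hX : {f : X → ℝ | Continuous f}.SeparatesPoints) :
    TopologicalSpace.SeparableSpace C(X, ℝ) ↔ CountableIWeight X := by
  rw [countableIWeight_iff_exists_countable_separatesPoints]
  constructor
  · intro _
    obtain ⟨D, hDc, hD⟩ := exists_countable_dense C(X, ℝ)
    exact ⟨D, hDc, separatesPoints_of_dense hX hD⟩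
  · rintro ⟨S, hSc, hS⟩
    exact separableSpace_of_countable_separatesPoints hSc hS

theorem statement2 (X : Type u) [TopologicalSpace X] [T35Space X] :
    TopologicalSpace.SeparableSpace C(X, ℝ) ↔ CountableIWeight X :=
  statement2_general X separatesPoints_continuous_of_t35Space
end

section
/- Let X be a Tychonoff space with iw(X) = ℵ₀. The bitopological function space (C(X), τ_k, τ_p) satisfies S_fin(𝒟^k, 𝒟^p) if and only if it satisfies S_fin(𝒟^k, Ω^p_0): for every sequence (D_n) of dense subsets of C_k(X) one can choose finite F_n ⊆ D_n such that the constant zero function 0 lies in the closure of ⋃_n F_n in C_p(X). -/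
open Set Filter Topology TopologicalSpace

universe u

/-! With `C_p(X)` separable, a set is `τ_p`-dense as soon as each member of a fixed sequence is in
its `τ_p`-closure. Translations preserve `τ_k`-density, so the principle at `0` yields the principle
at each of these functions; splitting a given sequence of sets into countably many subsequences lets
one selection handle all of them. Separability follows from `iw(X) = ℵ₀`: if `f` is a continuous
injection of `X` into the Hilbert cube `Q`, Tietze's theorem on the image of a compact subset of `X`
shows that precomposition with `f` maps the separable space `C_k(Q)` densely into `C_k(X)`. -/

universe v w

namespace SfinSel

variable {α : Type u} {𝒜 ℬ : Set (Set α)}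

theorem mono {ℬ' : Set (Set α)} (h : SfinSel 𝒜 ℬ) (hℬ : ℬ ⊆ ℬ') : SfinSel 𝒜 ℬ' := fun A hA =>
  let ⟨B, hB, hBmem⟩ := h A hA
  ⟨B, hB, hℬ hBmem⟩

theorem map {β : Type v} {𝒜' ℬ' : Set (Set β)} (h : SfinSel 𝒜 ℬ) (f : α → β)
    (h𝒜 : ∀ A ∈ 𝒜', f ⁻¹' A ∈ 𝒜) (hℬ : ∀ B ∈ ℬ, f '' B ∈ ℬ') : SfinSel 𝒜' ℬ' := by
  intro A hA
  obtain ⟨B, hB, hBmem⟩ := h (fun n => f ⁻¹' A n) fun n => h𝒜 _ (hA n)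
  refine ⟨fun n => f '' B n, fun n => ⟨(hB n).1.image f, image_subset_iff.2 (hB n).2⟩, ?_⟩
  rw [← image_iUnion]
  exact hℬ _ hBmem

theorem iInter {ι : Type v} [Countable ι] {ℬ : ι → Set (Set α)} (hℬ : ∀ i, IsUpperSet (ℬ i))
    (h : ∀ i, SfinSel 𝒜 (ℬ i)) : SfinSel 𝒜 (⋂ i, ℬ i) := by
  intro A hA
  obtain ⟨code, hcode⟩ := exists_injective_nat (ι × ℕ)
  choose B hB hBmem using fun i => h i (fun n => A (code (i, n))) fun n => hA _
  refine ⟨fun k => ⋃ p ∈ code ⁻¹' {k}, B p.1 p.2, fun k => ⟨?_, ?_⟩, mem_iInter.2 fun i => ?_⟩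
  · exact ((finite_singleton k).preimage hcode.injOn).biUnion fun p _ => (hB p.1 p.2).1
  · rintro b hb
    obtain ⟨p, rfl, hbp⟩ := mem_iUnion₂.1 hb
    exact (hB p.1 p.2).2 hbp
  · refine hℬ i (iUnion_subset fun n b hb => ?_) (hBmem i)
    exact mem_iUnion.2 ⟨code (i, n), mem_iUnion₂.2 ⟨(i, n), rfl, hb⟩⟩

end SfinSel

theorem sfinSel_dense_iff_forall_mem_closure {α : Type u} [TopologicalSpace α] [SeparableSpace α]
    {𝒜 : Set (Set α)} :
    SfinSel 𝒜 {D | Dense D} ↔ ∀ a, SfinSel 𝒜 {A | a ∈ closure A} := by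
  refine ⟨fun h a => h.mono fun D hD => hD a, fun h => ?_⟩
  obtain ⟨S, hScount, hSdense⟩ := exists_countable_dense α
  have : Countable S := hScount.to_subtype
  have hS : SfinSel 𝒜 (⋂ s : S, {A | (s : α) ∈ closure A}) :=
    SfinSel.iInter (fun s _ _ hAB hA => closure_mono hAB hA) fun s => h s
  refine hS.mono fun D hD => ?_
  have hSD : S ⊆ closure D := fun s hs => mem_iInter.1 hD ⟨s, hs⟩
  exact dense_closure.1 (hSdense.mono hSD)

theorem sfinSel_dense_iff_zero_mem_closure {M : Type u} [AddZeroClass M] [TopologicalSpace M]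
    [ContinuousConstVAdd M M] [SeparableSpace M] {𝒜 : Set (Set M)}
    (h𝒜 : ∀ g, ∀ A ∈ 𝒜, (g + ·) ⁻¹' A ∈ 𝒜) :
    SfinSel 𝒜 {D | Dense D} ↔ SfinSel 𝒜 {A | (0 : M) ∈ closure A} := by
  refine sfinSel_dense_iff_forall_mem_closure.trans ⟨fun h => h 0, fun h g => ?_⟩
  refine h.map (g + ·) (h𝒜 g) fun B hB => ?_
  simpa using mem_closure_image (continuous_const_vadd g).continuousAt hB

section CompactOpen

variable {X : Type u} {Y : Type v} {Z : Type w} [TopologicalSpace X] [TopologicalSpace Y]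
  [TopologicalSpace Z]

theorem dense_of_forall_isCompact_exists_eqOn {A : Set C(X, Z)}
    (hA : ∀ (g : C(X, Z)) (K : Set X), IsCompact K → ∃ h ∈ A, EqOn h g K) : Dense A := by
  intro g
  refine (mem_closure_iff_nhds_basis g.hasBasis_nhds).2 fun S ⟨hSfin, hS⟩ => ?_
  obtain ⟨h, hhA, hhg⟩ := hA g (⋃ p ∈ S, p.1) (hSfin.isCompact_biUnion fun p hp => (hS _ _ hp).1)
  refine ⟨h, hhA, mem_iInter₂.2 fun p hp => ?_⟩
  exact (hS _ _ hp).2.2.congr (hhg.symm.mono (subset_biUnion_of_mem hp))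

theorem exists_comp_eqOn_of_isCompact [T4Space Y] [TietzeExtension.{v, w} Z] {f : C(X, Y)}
    (hf : Function.Injective f) (g : C(X, Z)) {K : Set X} (hK : IsCompact K) :
    ∃ h : C(Y, Z), EqOn (h.comp f) g K := by
  have : CompactSpace K := isCompact_iff_compactSpace.1 hK
  have hfK : IsClosedEmbedding (f.restrict K) :=
    (f.restrict K).continuous.isClosedEmbedding (hf.comp Subtype.val_injective)
  obtain ⟨h, hh⟩ := (g.restrict K).exists_extension' hfK
  exact ⟨h, fun x hx => congrFun hh ⟨x, hx⟩⟩

theorem denseRange_precomp_of_injective [T4Space Y] [TietzeExtension.{v, w} Z] {f : C(X, Y)}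
    (hf : Function.Injective f) : DenseRange fun h : C(Y, Z) => h.comp f :=
  dense_of_forall_isCompact_exists_eqOn fun g _ hK =>
    let ⟨h, hh⟩ := exists_comp_eqOn_of_isCompact hf g hK
    ⟨h.comp f, mem_range_self h, hh⟩

end CompactOpen

theorem separableSpace_of_le {α : Type v} {t₁ t₂ : TopologicalSpace α} (h : t₁ ≤ t₂)
    (ht₁ : @SeparableSpace α t₁) : @SeparableSpace α t₂ :=
  @DenseRange.separableSpace α α t₁ ht₁ t₂ id (fun a => @subset_closure α t₂ _ _ ⟨a, rfl⟩)
    (continuous_id_of_le h)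

section CountableIWeight

variable {X : Type u} [TopologicalSpace X]

open unitInterval in
theorem CountableIWeight.exists_injective_hilbertCube (hiw : CountableIWeight X) :
    ∃ f : C(X, ℕ → I), Function.Injective f := by
  obtain ⟨Y, _, _, _, f, hf, hfbij⟩ := hiw
  let _ : MetricSpace Y := metrizableSpaceMetric Y
  obtain ⟨e, he⟩ := Metric.PiNatEmbed.exists_embedding_to_hilbert_cube (X := Y)
  exact ⟨⟨e ∘ f, he.continuous.comp hf⟩, he.injective.comp hfbij.injective⟩

theorem CountableIWeight.separableSpace_compactOpen {Z : Type w} [TopologicalSpace Z]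
    [SecondCountableTopology Z] [TietzeExtension.{0, w} Z] (hiw : CountableIWeight X) :
    SeparableSpace C(X, Z) :=
  let ⟨f, hf⟩ := hiw.exists_injective_hilbertCube
  (denseRange_precomp_of_injective hf).separableSpace f.continuous_precomp

theorem compactOpen_le_pointwiseTopology :
    (ContinuousMap.compactOpen : TopologicalSpace C(X, ℝ)) ≤ pointwiseTopology X :=
  continuous_iff_le_induced.1 continuous_coeFun

theorem CountableIWeight.separableSpace_pointwiseTopology (hiw : CountableIWeight X) :
    @SeparableSpace _ (pointwiseTopology X) :=
  separableSpace_of_le compactOpen_le_pointwiseTopology hiw.separableSpace_compactOpen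

end CountableIWeight

theorem continuousAdd_pointwiseTopology (X : Type u) [TopologicalSpace X] :
    @ContinuousAdd _ (pointwiseTopology X) _ :=
  continuousAdd_induced (ContinuousMap.coeFnAddMonoidHom : C(X, ℝ) →+ X → ℝ)

theorem statement11_general (X : Type u) [TopologicalSpace X]
    (hsep : @SeparableSpace _ (pointwiseTopology X)) :
    SfinSel {D : Set C(X, ℝ) | Dense D}
      {D : Set C(X, ℝ) | @Dense _ (pointwiseTopology X) D} ↔
    SfinSel {D : Set C(X, ℝ) | Dense D}
      {A : Set C(X, ℝ) | (0 : C(X, ℝ)) ∈ @closure _ (pointwiseTopology X) A} := by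
  have dense_preimage_add_left (g : C(X, ℝ)) (D : Set C(X, ℝ)) (hD : Dense D) :
      Dense ((g + ·) ⁻¹' D) :=
    hD.preimage (isOpenMap_add_left g)
  let _ := pointwiseTopology X
  have := continuousAdd_pointwiseTopology X
  exact sfinSel_dense_iff_zero_mem_closure dense_preimage_add_left

theorem statement11 (X : Type u) [TopologicalSpace X] [T35Space X]
    (hiw : CountableIWeight X) :
    SfinSel {D : Set C(X, ℝ) | Dense D}
      {D : Set C(X, ℝ) | @Dense _ (pointwiseTopology X) D} ↔
    SfinSel {D : Set C(X, ℝ) | Dense D}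
      {A : Set C(X, ℝ) | (0 : C(X, ℝ)) ∈ @closure _ (pointwiseTopology X) A} := by
  exact statement11_general X hiw.separableSpace_pointwiseTopology
end

section
/- Let X be a Tychonoff space. If X satisfies S_fin(𝒦, Ω) — i.e., for every sequence (𝒰_n) of open k-covers of X one can choose finite 𝒱_n ⊆ 𝒰_n such that ⋃_n 𝒱_n is an ω-cover of X — then player ONE has no winning strategy in the game G_fin(𝒦, Ω). -/
open Set Filter Topology TopologicalSpace

universe u

/-!
This is Hurewicz's argument for the Menger game, carried out in the finite powers of `X`. By
`S_fin(𝒦, Ω)`, each move of ONE contains an increasing sequence of finite families whose union is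
an ω-cover, so TWO may restrict himself to choosing an index `k` in each round, and ONE's strategy
becomes a tree of families indexed by finite sequences of natural numbers.

Fix `n`. An `n`-tuple that is captured by the index `m` in the first round is captured by every
larger index as well, so only the finitely many first moves below `m` matter for later rounds.
Hence, by induction, every `n`-tuple is captured by some index `k` in round `n` *whatever* the `n`
earlier indices were, and the set `S n k` of tuples for which `k` suffices is open in `X ^ n`. By
compactness, the open sets `W` with `W ^ n ⊆ S n k` for some `k` form a k-cover. Applying
`S_fin(𝒦, Ω)` to this sequence of k-covers yields indices `f n` such that each finite set has its
`n`-th power inside `S n (f n)` for arbitrarily large `n`, and TWO wins by playing `f`.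
-/

/-- A tree of sets `A l`, indexed by the finite sequences `l` of moves, which grows along every
branch and with the size of the last move, and in which the immediate successors of each node cover
the whole type. Unlike in a `CantorScheme`, moves are appended at the end of `l`. -/
structure IsIncreasingScheme {α : Type*} (A : List ℕ → Set α) : Prop where
  subset_concat : ∀ l k, A l ⊆ A (l ++ [k])
  monotone_concat : ∀ l, Monotone fun k => A (l ++ [k])
  iUnion_concat : ∀ l, ⋃ k, A (l ++ [k]) = univ

/-- The points that the scheme `A` captures by the move `k` after any sequence of at most `n`
earlier moves. Shorter sequences are included to make these sets open for an increasing scheme of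
open sets, as only earlier moves below `k` then matter. -/
def uniformLevel {α : Type*} (A : List ℕ → Set α) (n k : ℕ) : Set α :=
  ⋂ s ∈ {s : List ℕ | s.length ≤ n}, A (s ++ [k])

theorem uniformLevel_subset {α : Type*} {A : List ℕ → Set α} {n : ℕ} {s : List ℕ}
    (hs : s.length ≤ n) (k : ℕ) : uniformLevel A n k ⊆ A (s ++ [k]) :=
  fun _ hx => mem_iInter₂.1 hx s hs

namespace IsIncreasingScheme

variable {α : Type*} {A : List ℕ → Set α}

theorem subset_append (hA : IsIncreasingScheme A) (l s : List ℕ) : A l ⊆ A (l ++ s) := by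
  induction s using List.reverseRecOn with
  | nil => simp only [List.append_nil, subset_rfl]
  | append_singleton s k ih => exact ih.trans (List.append_assoc l s [k] ▸ hA.subset_concat _ k)

theorem comp_cons (hA : IsIncreasingScheme A) (j : ℕ) :
    IsIncreasingScheme fun s => A (j :: s) where
  subset_concat l := hA.subset_concat (j :: l)
  monotone_concat l := hA.monotone_concat (j :: l)
  iUnion_concat l := hA.iUnion_concat (j :: l)

theorem monotone_uniformLevel (hA : IsIncreasingScheme A) (n : ℕ) : Monotone (uniformLevel A n) :=
  fun _ _ hk => iInter₂_mono fun s _ => hA.monotone_concat s hk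

theorem mem_uniformLevel_succ_of_forall_lt (hA : IsIncreasingScheme A) {n m k : ℕ} (hmk : m ≤ k)
    {x : α} (hm : x ∈ A [m]) (hlt : ∀ j < m, x ∈ uniformLevel (fun s => A (j :: s)) n k) :
    x ∈ uniformLevel A (n + 1) k := by
  refine mem_iInter₂.2 fun s hs => ?_
  cases s with
  | nil => exact hA.monotone_concat [] hmk hm
  | cons j t =>
    rcases lt_or_ge j m with hj | hj
    · exact uniformLevel_subset (Nat.le_of_succ_le_succ hs) k (hlt j hj)
    · exact hA.subset_append [j] (t ++ [k]) (hA.monotone_concat [] hj hm)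

theorem uniformLevel_succ (hA : IsIncreasingScheme A) (n k : ℕ) :
    uniformLevel A (n + 1) k =
      A [k] ∩ ⋂ j ∈ Iio k, uniformLevel (fun s => A (j :: s)) n k := by
  refine Subset.antisymm (subset_inter ?_ ?_) fun x hx =>
    hA.mem_uniformLevel_succ_of_forall_lt le_rfl hx.1 (mem_iInter₂.1 hx.2)
  · exact uniformLevel_subset (s := []) (Nat.zero_le (n + 1)) k
  · exact subset_iInter₂ fun j _ => subset_iInter₂ fun t ht =>
      uniformLevel_subset (s := j :: t) (Nat.succ_le_succ ht) k

theorem iUnion_uniformLevel (hA : IsIncreasingScheme A) (n : ℕ) :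
    ⋃ k, uniformLevel A n k = univ := by
  refine eq_univ_of_forall fun x => mem_iUnion.2 ?_
  obtain ⟨m, hm⟩ := mem_iUnion.1 (hA.iUnion_concat [] ▸ mem_univ x)
  induction n generalizing A m with
  | zero => exact ⟨m, by simpa [uniformLevel] using hm⟩
  | succ n ih =>
    have hlevel (j : ℕ) : ∃ k, x ∈ uniformLevel (fun s => A (j :: s)) n k := by
      obtain ⟨i, hi⟩ := mem_iUnion.1 (hA.iUnion_concat [j] ▸ mem_univ x)
      exact ih (hA.comp_cons j) i hi
    choose g hg using hlevel
    obtain ⟨b, hb⟩ := ((finite_Iio m).image g).bddAbove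
    exact ⟨max m b, hA.mem_uniformLevel_succ_of_forall_lt (le_max_left m b) hm fun j hj =>
      (hA.comp_cons j).monotone_uniformLevel n
        ((hb (mem_image_of_mem g hj)).trans (le_max_right m b)) (hg j)⟩

theorem isOpen_uniformLevel [TopologicalSpace α] (hA : IsIncreasingScheme A)
    (ho : ∀ l, IsOpen (A l)) (n k : ℕ) : IsOpen (uniformLevel A n k) := by
  induction n generalizing A with
  | zero => simpa [uniformLevel] using ho [k]
  | succ n ih =>
    rw [hA.uniformLevel_succ]
    exact (ho [k]).inter
      ((finite_Iio k).isOpen_biInter fun j _ => ih (hA.comp_cons j) fun s => ho (j :: s))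

end IsIncreasingScheme

section Strategies

variable {α : Type*}

/-- The moves made by TWO along `l`, when his answer to the history `h` is one of the sets `E h k`,
`k : ℕ`, and `l` lists the indices of his successive choices. -/
def history (E : List (Set α) → ℕ → Set α) (l : List ℕ) : List (Set α) :=
  l.foldl (fun h k => h ++ [E h k]) []

/-- All elements selected by TWO along the indices `l`. -/
def selected (E : List (Set α) → ℕ → Set α) (l : List ℕ) : Set α :=
  ⋃ B ∈ history E l, B

theorem history_concat (E : List (Set α) → ℕ → Set α) (l : List ℕ) (k : ℕ) :
    history E (l ++ [k]) = history E l ++ [E (history E l) k] := by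
  simp only [history, List.foldl_append, List.foldl_cons, List.foldl_nil]

theorem selected_concat (E : List (Set α) → ℕ → Set α) (l : List ℕ) (k : ℕ) :
    selected E (l ++ [k]) = selected E l ∪ E (history E l) k := by
  ext a
  simp [selected, history_concat, or_and_right, exists_or]

theorem exists_mem_of_mem_selected {E : List (Set α) → ℕ → Set α} {l : List ℕ} {a : α}
    (ha : a ∈ selected E l) : ∃ h k, a ∈ E h k := by
  induction l using List.reverseRecOn with
  | nil => simp [selected, history] at ha
  | append_singleton l k ih =>
    rw [selected_concat] at ha
    exact ha.elim ih fun hk => ⟨_, k, hk⟩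

theorem history_ofFn (E : List (Set α) → ℕ → Set α) (f : ℕ → ℕ) (n : ℕ) :
    history E (List.ofFn fun i : Fin n => f i) =
      List.ofFn fun i : Fin n => E (history E (List.ofFn fun j : Fin i => f j)) (f i) := by
  induction n with
  | zero => simp [history]
  | succ n ih =>
    rw [List.ofFn_succ_last, List.ofFn_succ_last]
    simpa only [Fin.val_castSucc, Fin.val_last, history_concat, List.append_cancel_right_eq]
      using ih

theorem selected_ofFn_subset (E : List (Set α) → ℕ → Set α) (f : ℕ → ℕ) (n : ℕ) :
    selected E (List.ofFn fun i : Fin n => f i) ⊆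
      ⋃ m, E (history E (List.ofFn fun i : Fin m => f i)) (f m) := by
  refine iUnion₂_subset fun B hB => ?_
  rw [history_ofFn, List.mem_ofFn] at hB
  obtain ⟨i, rfl⟩ := hB
  exact subset_iUnion (fun m => E (history E (List.ofFn fun i : Fin m => f i)) (f m)) i

end Strategies

section Powers

variable {X : Type*}

theorem exists_range_fin_eq {F : Set X} (hF : F.Finite) (hne : F.Nonempty) {n : ℕ}
    (hn : F.ncard ≤ n) : ∃ x : Fin n → X, range x = F := by
  have := hF.to_subtype
  have := Fintype.ofFinite F
  obtain ⟨y, hy⟩ : ∃ y : Fin n → F, Function.Surjective y := by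
    refine Function.exists_surjective_iff.2 ⟨⟨fun _ => ⟨_, hne.some_mem⟩⟩, ?_⟩
    refine Function.Embedding.nonempty_of_card_le ?_
    rwa [Fintype.card_fin, fintypeCard_eq_ncard]
  refine ⟨fun i => y i, ?_⟩
  rw [range_comp' Subtype.val y, hy.range_eq, image_univ, Subtype.range_val]

/-- The families of points, indexed by `ι`, which lie in a single member of `𝒱`. -/
def capturedTuples (ι : Type*) (𝒱 : Set (Set X)) : Set (ι → X) :=
  ⋃ V ∈ 𝒱, univ.pi fun _ => V

theorem mem_capturedTuples {ι : Type*} {𝒱 : Set (Set X)} {x : ι → X} :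
    x ∈ capturedTuples ι 𝒱 ↔ ∃ V ∈ 𝒱, range x ⊆ V := by
  simp [capturedTuples, range_subset_iff]

theorem capturedTuples_mono (ι : Type*) : Monotone (capturedTuples (X := X) ι) :=
  fun _ _ h => biUnion_subset_biUnion_left h

theorem isOpen_capturedTuples [TopologicalSpace X] (ι : Type*) [Finite ι] {𝒱 : Set (Set X)}
    (h𝒱 : ∀ V ∈ 𝒱, IsOpen V) : IsOpen (capturedTuples ι 𝒱) :=
  isOpen_biUnion fun V hV => isOpen_set_pi finite_univ fun _ _ => h𝒱 V hV

theorem isIncreasingScheme_capturedTuples_selected {E : List (Set (Set X)) → ℕ → Set (Set X)}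
    (hmono : ∀ h, Monotone (E h)) (ι : Type*) [Finite ι]
    (hE : ∀ h, ∀ F : Set X, F.Finite → ∃ V ∈ ⋃ k, E h k, F ⊆ V) :
    IsIncreasingScheme fun l => capturedTuples ι (selected E l) where
  subset_concat l k := capturedTuples_mono ι <| by
    rw [selected_concat]
    exact subset_union_left
  monotone_concat l j k hjk := capturedTuples_mono ι <| by
    simp only [selected_concat]
    exact union_subset_union_right _ (hmono _ hjk)
  iUnion_concat l := by
    refine eq_univ_of_forall fun x => mem_iUnion.2 ?_
    obtain ⟨V, hV, hxV⟩ := hE (history E l) (range x) (finite_range x)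
    obtain ⟨k, hk⟩ := mem_iUnion.1 hV
    exact ⟨k, mem_capturedTuples.2 ⟨V, selected_concat E l k ▸ Or.inr hk, hxV⟩⟩

end Powers

section Tube

theorem exists_le_nhds_of_le_nhdsSet {X : Type*} [TopologicalSpace X] {K : Set X}
    (hK : IsCompact K) {u : Ultrafilter X} (hu : ↑u ≤ 𝓝ˢ K) : ∃ x ∈ K, ↑u ≤ 𝓝 x := by
  by_contra! hnot
  have hdisj : Disjoint (𝓝ˢ K) u :=
    hK.disjoint_nhdsSet_left.2 fun x hx => (Ultrafilter.disjoint_iff_not_le.2 (hnot x hx)).symm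
  exact u.neBot.ne (disjoint_self.1 (hdisj.mono_left hu))

theorem pi_nhdsSet_le_nhdsSet_pi {ι : Type*} {X : ι → Type*} [∀ i, TopologicalSpace (X i)]
    {K : ∀ i, Set (X i)} (hK : ∀ i, IsCompact (K i)) :
    Filter.pi (fun i => 𝓝ˢ (K i)) ≤ 𝓝ˢ (univ.pi K) := by
  refine le_iff_ultrafilter.2 fun u hu => ?_
  have hlim (i : ι) : ∃ a ∈ K i, (u.map (Function.eval i) : Filter (X i)) ≤ 𝓝 a :=
    exists_le_nhds_of_le_nhdsSet (hK i) ((tendsto_eval_pi _ i).mono_left hu)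
  choose a haK ha using hlim
  calc (u : Filter (∀ i, X i)) ≤ 𝓝 a := nhds_pi (a := a) ▸ tendsto_pi.2 ha
    _ ≤ 𝓝ˢ (univ.pi K) := nhds_le_nhdsSet fun i _ => haK i

theorem exists_isOpen_pi_subset {ι X : Type*} [Finite ι] [TopologicalSpace X] {K : Set X}
    (hK : IsCompact K) {O : Set (ι → X)} (hO : IsOpen O) (hKO : (univ.pi fun _ => K) ⊆ O) :
    ∃ W, IsOpen W ∧ K ⊆ W ∧ (univ.pi fun _ => W) ⊆ O := by
  obtain ⟨I, t, ht, htO⟩ :=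
    mem_pi'.1 (pi_nhdsSet_le_nhdsSet_pi (fun _ : ι => hK) (hO.mem_nhdsSet.2 hKO))
  obtain ⟨W, hW, hKW, hWt⟩ := mem_nhdsSet_iff_exists.1 (iInter_mem.2 ht)
  exact ⟨W, hW, hKW, fun x hx => htO fun i _ => mem_iInter.1 (hWt (hx i trivial)) i⟩

end Tube

section Covers

variable {X : Type u} [TopologicalSpace X]

theorem IsKCover.isOmegaCover {𝒰 : Set (Set X)} (h𝒰 : IsKCover 𝒰) : IsOmegaCover 𝒰 :=
  ⟨h𝒰.1, h𝒰.2.1, h𝒰.2.2.1, fun F hF => h𝒰.2.2.2 F hF.isCompact⟩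

theorem IsOmegaCover.nonempty {𝒱 : Set (Set X)} (h𝒱 : IsOmegaCover 𝒱) : Nonempty X := by
  by_contra! hX
  obtain ⟨V, hV, -⟩ := h𝒱.2.2.2 ∅ finite_empty
  exact h𝒱.2.2.1 (Subsingleton.elim V univ ▸ hV)

theorem IsKCover.exists_pi_subset {𝒰 : Set (Set X)} (h𝒰 : IsKCover 𝒰) {ι κ : Type*} [Finite ι]
    [Nonempty κ] {S : κ → Set (ι → X)} (hS : ∀ k, IsOpen (S k)) (hdir : Directed (· ⊆ ·) S)
    (hcover : ⋃ k, S k = univ) :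
    ∃ 𝒲, IsKCover 𝒲 ∧ ∀ W ∈ 𝒲, ∃ k, (univ.pi fun _ => W) ⊆ S k := by
  -- The family of all admissible `W` is a k-cover unless it contains `univ`.
  by_cases huniv : ∃ k, S k = univ
  · obtain ⟨k, hk⟩ := huniv
    exact ⟨𝒰, h𝒰, fun W _ => ⟨k, hk ▸ subset_univ _⟩⟩
  have hcompact (K : Set X) (hK : IsCompact K) :
      ∃ W ∈ {W | IsOpen W ∧ ∃ k, (univ.pi fun _ => W) ⊆ S k}, K ⊆ W := by
    obtain ⟨k, hk⟩ := (isCompact_univ_pi fun _ : ι => hK).elim_directed_cover S hS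
      (hcover ▸ subset_univ _) hdir
    obtain ⟨W, hW, hKW, hWS⟩ := exists_isOpen_pi_subset hK (hS k) hk
    exact ⟨W, ⟨hW, k, hWS⟩, hKW⟩
  refine ⟨_, ⟨fun W hW => hW.1, eq_univ_of_forall fun a => ?_, ?_, hcompact⟩, fun W hW => hW.2⟩
  · obtain ⟨W, hW, haW⟩ := hcompact {a} isCompact_singleton
    exact ⟨W, hW, haW rfl⟩
  · rintro ⟨-, k, hk⟩
    exact huniv ⟨k, univ_subset_iff.1 (pi_univ univ ▸ hk)⟩

theorem isOmegaCover_of_forall_nonempty [Nonempty X] {𝒱 : Set (Set X)}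
    (hmem : ∀ V ∈ 𝒱, IsOpen V ∧ V ≠ univ)
    (hF : ∀ F : Set X, F.Finite → F.Nonempty → ∃ V ∈ 𝒱, F ⊆ V) : IsOmegaCover 𝒱 := by
  refine ⟨fun V hV => (hmem V hV).1, eq_univ_of_forall fun a => ?_,
    fun huniv => (hmem univ huniv).2 rfl, fun F hfin => ?_⟩
  · obtain ⟨V, hV, haV⟩ := hF {a} (finite_singleton a) (singleton_nonempty a)
    exact ⟨V, hV, haV rfl⟩
  · obtain ⟨a⟩ := ‹Nonempty X›
    obtain ⟨V, hV, hFV⟩ := hF (insert a F) (hfin.insert a) (insert_nonempty a F)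
    exact ⟨V, hV, (subset_insert a F).trans hFV⟩

theorem IsOmegaCover.exists_subset_notMem {𝒱 ℱ : Set (Set X)} (h𝒱 : IsOmegaCover 𝒱)
    (hℱ : ℱ.Finite) {F : Set X} (hF : F.Finite) : ∃ V ∈ 𝒱, V ∉ ℱ ∧ F ⊆ V := by
  have := h𝒱.nonempty
  have hpoint : ∀ W ∈ 𝒱 ∩ ℱ, ∃ a, a ∉ W := fun W hW =>
    (ne_univ_iff_exists_notMem W).1 (ne_of_mem_of_not_mem hW.1 h𝒱.2.2.1)
  choose! a ha using hpoint
  obtain ⟨V, hV, hsub⟩ := h𝒱.2.2.2 (F ∪ a '' (𝒱 ∩ ℱ)) (hF.union ((hℱ.inter_of_right 𝒱).image a))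
  exact ⟨V, hV, fun hVℱ => ha V ⟨hV, hVℱ⟩ (hsub (Or.inr (mem_image_of_mem a ⟨hV, hVℱ⟩))),
    subset_union_left.trans hsub⟩

theorem IsOmegaCover.exists_ge_of_iUnion {D : ℕ → Set (Set X)} (hω : IsOmegaCover (⋃ n, D n))
    (hD : ∀ n, (D n).Finite) {F : Set X} (hF : F.Finite) (m : ℕ) :
    ∃ n ≥ m, ∃ W ∈ D n, F ⊆ W := by
  obtain ⟨W, hW, hWm, hFW⟩ :=
    hω.exists_subset_notMem ((finite_Iio m).biUnion (t := D) fun i _ => hD i) hF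
  obtain ⟨n, hn⟩ := mem_iUnion.1 hW
  exact ⟨n, not_lt.1 fun hnm => hWm (mem_biUnion hnm hn), W, hn, hFW⟩

end Covers

namespace SfinSel

theorem exists_monotone_finite {α : Type u} {𝒜 ℬ : Set (Set α)} (h : SfinSel 𝒜 ℬ) {A : Set α}
    (hA : A ∈ 𝒜) :
    ∃ e : ℕ → Set α, Monotone e ∧ (∀ k, (e k).Finite ∧ e k ⊆ A) ∧ (⋃ k, e k) ∈ ℬ := by
  obtain ⟨B, hB, hℬ⟩ := h (fun _ => A) fun _ => hA
  refine ⟨accumulate B, monotone_accumulate, fun k => ⟨?_, ?_⟩, by rwa [iUnion_accumulate]⟩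
  · exact (finite_Iic k).biUnion fun i _ => (hB i).1
  · exact iUnion₂_subset fun i _ => (hB i).2

variable {X : Type u} [TopologicalSpace X]

theorem exists_forall_subset_pi
    (h : SfinSel {𝒰 : Set (Set X) | IsKCover 𝒰} {𝒰 : Set (Set X) | IsOmegaCover 𝒰})
    {𝒰 : Set (Set X)} (h𝒰 : IsKCover 𝒰) {S : ∀ n, ℕ → Set (Fin n → X)}
    (hS : ∀ n k, IsOpen (S n k)) (hmono : ∀ n, Monotone (S n)) (hcover : ∀ n, ⋃ k, S n k = univ) :
    ∃ f : ℕ → ℕ, ∀ F : Set X, F.Finite → ∀ m, ∃ n ≥ m, (univ.pi fun _ => F) ⊆ S n (f n) := by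
  choose C hC hCS using fun n =>
    h𝒰.exists_pi_subset (hS n) (directed_of_isDirected_le (hmono n)) (hcover n)
  obtain ⟨D, hD, hω⟩ := h C hC
  have hbound (n : ℕ) : ∃ k, ∀ W ∈ D n, (univ.pi fun _ => W) ⊆ S n k := by
    choose! g hg using hCS n
    obtain ⟨k, hk⟩ := ((hD n).1.image g).bddAbove
    exact ⟨k, fun W hW => (hg W ((hD n).2 hW)).trans (hmono n (hk (mem_image_of_mem g hW)))⟩
  choose f hf using hbound
  refine ⟨f, fun F hF m => ?_⟩
  obtain ⟨n, hn, W, hW, hFW⟩ := hω.exists_ge_of_iUnion (fun n => (hD n).1) hF m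
  exact ⟨n, hn, (pi_mono fun _ _ => hFW).trans (hf n W hW)⟩

theorem exists_branch_capturing
    (h : SfinSel {𝒰 : Set (Set X) | IsKCover 𝒰} {𝒰 : Set (Set X) | IsOmegaCover 𝒰})
    {𝒰 : Set (Set X)} (h𝒰 : IsKCover 𝒰) {U : List ℕ → Set (Set X)}
    (ho : ∀ l, ∀ V ∈ U l, IsOpen V)
    (hU : ∀ n, IsIncreasingScheme fun l => capturedTuples (Fin n) (U l)) :
    ∃ f : ℕ → ℕ, ∀ F : Set X, F.Finite → F.Nonempty →
      ∃ n, ∃ V ∈ U (List.ofFn fun i : Fin n => f i), F ⊆ V := by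
  obtain ⟨f, hf⟩ := h.exists_forall_subset_pi h𝒰
    (fun n => (hU n).isOpen_uniformLevel (fun l => isOpen_capturedTuples (Fin n) (ho l)) n)
    (fun n => (hU n).monotone_uniformLevel n) (fun n => (hU n).iUnion_uniformLevel n)
  refine ⟨f, fun F hF hne => ?_⟩
  obtain ⟨n, hn, hFn⟩ := hf F hF F.ncard
  obtain ⟨x, rfl⟩ := exists_range_fin_eq hF hne hn
  have hx : x ∈ capturedTuples (Fin n) (U ((List.ofFn fun i : Fin n => f i) ++ [f n])) :=
    uniformLevel_subset List.length_ofFn.le (f n) (hFn fun i _ => mem_range_self i)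
  refine ⟨n + 1, ?_⟩
  rw [List.ofFn_succ_last]
  exact mem_capturedTuples.1 hx

end SfinSel

theorem statement12_general (X : Type u) [TopologicalSpace X]
    (h : SfinSel {𝒰 : Set (Set X) | IsKCover 𝒰} {𝒰 : Set (Set X) | IsOmegaCover 𝒰}) :
    ¬ ∃ σ : List (Set (Set X)) → Set (Set X),
      IsWinningStrategyOneGfin {𝒰 : Set (Set X) | IsKCover 𝒰}
        {𝒰 : Set (Set X) | IsOmegaCover 𝒰} σ := by
  rintro ⟨σ, hσ, hwin⟩
  choose E hmono hE hω using fun l => h.exists_monotone_finite (hσ l)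
  have hproper {l k V} (hV : V ∈ E l k) : IsOpen V ∧ V ≠ univ :=
    ⟨(hσ l).1 V ((hE l k).2 hV), ne_of_mem_of_not_mem ((hE l k).2 hV) (hσ l).2.2.1⟩
  have hopen (l) : ∀ V ∈ selected E l, IsOpen V := fun V hV =>
    let ⟨_, _, hVE⟩ := exists_mem_of_mem_selected hV
    (hproper hVE).1
  have hscheme (n : ℕ) : IsIncreasingScheme fun l => capturedTuples (Fin n) (selected E l) :=
    isIncreasingScheme_capturedTuples_selected hmono (Fin n) fun l => (hω l).2.2.2
  obtain ⟨f, hf⟩ := h.exists_branch_capturing (hσ []) hopen hscheme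
  refine hwin (fun n => E (history E (List.ofFn fun i : Fin n => f i)) (f n))
    (fun n => history_ofFn E f n ▸ hE _ _) ?_
  have := (hσ []).isOmegaCover.nonempty
  refine isOmegaCover_of_forall_nonempty (fun V hV => ?_) fun F hF hne => ?_
  · obtain ⟨n, hn⟩ := mem_iUnion.1 hV
    exact hproper hn
  · obtain ⟨n, V, hV, hFV⟩ := hf F hF hne
    exact ⟨V, selected_ofFn_subset E f n hV, hFV⟩

theorem statement12 (X : Type u) [TopologicalSpace X] [T35Space X]
    (h : SfinSel {𝒰 : Set (Set X) | IsKCover 𝒰} {𝒰 : Set (Set X) | IsOmegaCover 𝒰}) :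
    ¬ ∃ σ : List (Set (Set X)) → Set (Set X),
      IsWinningStrategyOneGfin {𝒰 : Set (Set X) | IsKCover 𝒰}
        {𝒰 : Set (Set X) | IsOmegaCover 𝒰} σ :=
  statement12_general X h
end

section
/- For a Tychonoff space X, the following are equivalent: (1) the bitopological function space (C(X), τ_k, τ_p) satisfies S₁(Ω^k_0, Γ^p_0), i.e., for every sequence (A_n) of subsets of C(X) each having the constant zero function 0 in its closure in C_k(X) but with 0 ∉ A_n, one can choose f_n ∈ A_n such that the set {f_n : n ∈ ℕ} is infinite, does not contain 0, and every neighborhood of 0 in C_p(X) contains all but finitely many of its elements; (2) X satisfies S₁(𝒦, Γ), i.e., for every sequence (𝒰_n) of open k-covers of X one can choose U_n ∈ 𝒰_n such that {U_n : n ∈ ℕ} is a γ-cover of X. -/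
open Set Filter Topology TopologicalSpace

universe u

/-!
Small functions correspond to large open sets: `0` is in the compact-open closure of `A` iff for
every `ε > 0` each compact set lies in one of the open sets `{x | |f x| < ε}`, `f ∈ A`, while `f n`
converges pointwise to `0` iff, for every `ε > 0`, each point is eventually in `{x | |f n x| < ε}`.

From functions to covers, a k-cover `𝒰 n` is replaced by the functions that have maximum `n + 1`
and equal `n + 1` off some `U ∈ 𝒰 n`; complete regularity puts `0` in their closure, and the
different maxima keep the selected functions distinct, so that they really converge as a sequence.

From covers to functions, apply the selection principle to the sets `{x | |f x| < 1 / (n + 1)}`.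
A γ-cover only says something about the *set* of selected members, which may repeat; applying the
principle to intersections of the first `n + 1` covers and passing to a subsequence of distinct
members gives a selection that contains every point from some index on.
-/

section Ranges

variable {ι α : Type*} {f : ι → α}

lemma infinite_range_of_forall_eventually_cofinite_ne [Infinite ι]
    (h : ∀ i, ∀ᶠ j in cofinite, f j ≠ f i) : (range f).Infinite := by
  intro hfin
  refine infinite_univ (α := ι) (Finite.of_finite_fibers f (by rwa [image_univ]) ?_)
  rintro _ ⟨i, -, rfl⟩
  exact (eventually_cofinite.1 (h i)).subset fun j hj => not_not.2 hj.2

lemma finite_setOf_mem_range_not_of_eventually_cofinite {p : α → Prop}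
    (h : ∀ᶠ i in cofinite, p (f i)) : {a ∈ range f | ¬ p a}.Finite := by
  refine ((eventually_cofinite.1 h).image f).subset ?_
  rintro _ ⟨⟨i, rfl⟩, hi⟩
  exact mem_image_of_mem f hi

lemma eventually_cofinite_of_finite_setOf_mem_not (hf : Function.Injective f) {s : Set α}
    (hs : ∀ i, f i ∈ s) {p : α → Prop} (h : {a ∈ s | ¬ p a}.Finite) : ∀ᶠ i in cofinite, p (f i) :=
  eventually_cofinite.2 <| (h.preimage hf.injOn).subset fun i hi => ⟨hs i, hi⟩

lemma exists_strictMono_injective_comp_of_infinite_range {b : ℕ → α} (h : (range b).Infinite) :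
    ∃ φ : ℕ → ℕ, StrictMono φ ∧ Function.Injective (b ∘ φ) := by
  let e : ℕ ↪ range b := h.natEmbedding
  have hinj : Function.Injective (rangeSplitting b ∘ e) :=
    (rangeSplitting_injective b).comp e.injective
  obtain ⟨ψ, hψ, hφ⟩ := strictMono_subseq_of_tendsto_atTop hinj.nat_tendsto_atTop
  refine ⟨_, hφ, fun i j hij => hψ.injective (e.injective (Subtype.ext ?_))⟩
  simpa only [Function.comp_apply, apply_rangeSplitting] using hij

end Ranges

section Covers

variable {X : Type u} [TopologicalSpace X]

lemma isGammaCover_range {ι : Type*} [Infinite ι] {U : ι → Set X} (hopen : ∀ i, IsOpen (U i))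
    (hne : ∀ i, U i ≠ univ) (h : ∀ x, ∀ᶠ i in cofinite, x ∈ U i) : IsGammaCover (range U) := by
  refine ⟨forall_mem_range.2 hopen, eq_univ_of_forall fun x => ?_, ?_, fun F hF => ?_⟩
  · obtain ⟨i, hi⟩ := (h x).exists
    exact ⟨U i, mem_range_self i, hi⟩
  · refine infinite_range_of_forall_eventually_cofinite_ne fun i => ?_
    obtain ⟨x, hx⟩ := (ne_univ_iff_exists_notMem _).1 (hne i)
    filter_upwards [h x] with j hj heq
    exact hx (heq ▸ hj)
  · exact finite_setOf_mem_range_not_of_eventually_cofinite (hF.eventually_all.2 fun x _ => h x)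

lemma IsGammaCover.eventually_mem {𝒰 : Set (Set X)} (h : IsGammaCover 𝒰) {ι : Type*}
    {U : ι → Set X} (hU : Function.Injective U) (hmem : ∀ i, U i ∈ 𝒰) (x : X) :
    ∀ᶠ i in cofinite, x ∈ U i := by
  simpa only [singleton_subset_iff] using
    eventually_cofinite_of_finite_setOf_mem_not hU hmem (h.2.2.2 {x} (finite_singleton x))

/-- A family of open sets is a *k-family* if every compact set is contained in a member. This is a
k-cover without nontriviality, so that the whole space may be a member. -/
def IsKFamily (𝒰 : Set (Set X)) : Prop :=
  (∀ U ∈ 𝒰, IsOpen U) ∧ ∀ K : Set X, IsCompact K → ∃ U ∈ 𝒰, K ⊆ U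

lemma isKCover_iff_s13 {𝒰 : Set (Set X)} : IsKCover 𝒰 ↔ IsKFamily 𝒰 ∧ univ ∉ 𝒰 := by
  refine ⟨fun ⟨hopen, _, huniv, hK⟩ => ⟨⟨hopen, hK⟩, huniv⟩,
    fun ⟨⟨hopen, hK⟩, huniv⟩ => ⟨hopen, eq_univ_of_forall fun x => ?_, huniv, hK⟩⟩
  obtain ⟨U, hU, hxU⟩ := hK {x} isCompact_singleton
  exact ⟨U, hU, singleton_subset_iff.1 hxU⟩

/-- The common refinement of `𝒰 0, …, 𝒰 n`: all sets `V 0 ∩ ⋯ ∩ V n` with `V i ∈ 𝒰 i`.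
A set selected from it can be enlarged to a member of any earlier `𝒰 i`. The entries `V i`, `i > n`,
do not affect the intersection; they only spare a finite index type. -/
def commonRefinement {α : Type*} (𝒰 : ℕ → Set (Set α)) (n : ℕ) : Set (Set α) :=
  {W | ∃ V : ℕ → Set α, (∀ i, V i ∈ 𝒰 i) ∧ dissipate V n = W}

lemma IsKFamily.commonRefinement {𝒰 : ℕ → Set (Set X)} (h : ∀ n, IsKFamily (𝒰 n)) (n : ℕ) :
    IsKFamily (commonRefinement 𝒰 n) := by
  refine ⟨?_, fun K hK => ?_⟩
  · rintro _ ⟨V, hV, rfl⟩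
    exact (finite_Iic n).isOpen_biInter fun i _ => (h i).1 _ (hV i)
  · choose V hV hKV using fun i => (h i).2 K hK
    exact ⟨_, ⟨V, hV, rfl⟩, subset_iInter₂ fun i _ => hKV i⟩

lemma IsKCover.commonRefinement {𝒰 : ℕ → Set (Set X)} (h : ∀ n, IsKCover (𝒰 n)) (n : ℕ) :
    IsKCover (commonRefinement 𝒰 n) := by
  refine isKCover_iff_s13.2 ⟨.commonRefinement (fun i => (isKCover_iff_s13.1 (h i)).1) n, ?_⟩
  rintro ⟨V, hV, hW⟩
  have hVn : V n = univ := univ_subset_iff.1 (hW.ge.trans (dissipate_subset le_rfl))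
  exact (isKCover_iff_s13.1 (h n)).2 (hVn ▸ hV n)

lemma S1sel.exists_eventually_mem_of_isKCover
    (h : S1sel {𝒰 : Set (Set X) | IsKCover 𝒰} {𝒰 : Set (Set X) | IsGammaCover 𝒰})
    {𝒰 : ℕ → Set (Set X)} (h𝒰 : ∀ n, IsKCover (𝒰 n)) :
    ∃ U : ℕ → Set X, (∀ n, U n ∈ 𝒰 n) ∧ ∀ x, ∀ᶠ n in cofinite, x ∈ U n := by
  obtain ⟨W, hW, hWΓ⟩ := h _ (IsKCover.commonRefinement h𝒰)
  choose V hV hVW using hW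
  obtain ⟨φ, hφ, hinj⟩ := exists_strictMono_injective_comp_of_infinite_range hWΓ.2.2.1
  have hsub : ∀ m, W (φ m) ⊆ V (φ m) m := fun m =>
    (hVW (φ m)).ge.trans (dissipate_subset (hφ.id_le m))
  have hx : ∀ x, ∀ᶠ m in cofinite, x ∈ W (φ m) :=
    hWΓ.eventually_mem hinj fun m => mem_range_self (φ m)
  exact ⟨fun m => V (φ m) m, fun m => hV (φ m) m, fun x => (hx x).mono fun m hm => hsub m hm⟩

lemma S1sel.exists_eventually_mem_of_isKFamily
    (h : S1sel {𝒰 : Set (Set X) | IsKCover 𝒰} {𝒰 : Set (Set X) | IsGammaCover 𝒰})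
    {𝒰 : ℕ → Set (Set X)} (h𝒰 : ∀ n, IsKFamily (𝒰 n)) :
    ∃ U : ℕ → Set X, (∀ n, U n ∈ 𝒰 n) ∧ ∀ x, ∀ᶠ n in cofinite, x ∈ U n := by
  classical
  by_cases! hall : ∀ n, univ ∈ 𝒰 n
  · exact ⟨fun _ => univ, hall, fun x => .of_forall fun _ => mem_univ x⟩
  obtain ⟨m, hm⟩ := hall
  -- Families containing `univ` are replaced by the k-cover `𝒰 m`, and `univ` is selected there.
  have hcover : ∀ n, IsKCover (if univ ∈ 𝒰 n then 𝒰 m else 𝒰 n) := fun n => by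
    split_ifs with hn
    exacts [isKCover_iff_s13.2 ⟨h𝒰 m, hm⟩, isKCover_iff_s13.2 ⟨h𝒰 n, hn⟩]
  obtain ⟨U, hU, hxU⟩ := h.exists_eventually_mem_of_isKCover hcover
  refine ⟨fun n => if univ ∈ 𝒰 n then univ else U n, fun n => ?_, fun x => ?_⟩
  · by_cases hn : univ ∈ 𝒰 n
    · simpa only [if_pos hn] using hn
    · simpa only [if_neg hn] using hU n
  · filter_upwards [hxU x] with n hn
    split_ifs
    exacts [mem_univ x, hn]

end Covers

section FunctionSpaces

variable {X : Type u} [TopologicalSpace X]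

lemma tendsto_pointwiseTopology_iff {ι : Type*} {l : Filter ι} {f : ι → C(X, ℝ)} {g : C(X, ℝ)} :
    Tendsto f l (@nhds _ (pointwiseTopology X) g) ↔ ∀ x, Tendsto (f · x) l (𝓝 (g x)) := by
  rw [pointwiseTopology, nhds_induced, tendsto_comap_iff]
  exact tendsto_pi_nhds

lemma gammaPZero_range {ι : Type*} [Infinite ι] {f : ι → C(X, ℝ)} (hne : ∀ i, f i ≠ 0)
    (hf : ∀ x, Tendsto (f · x) cofinite (𝓝 0)) : GammaPZero X (range f) := by
  refine ⟨?_, fun ⟨i, hi⟩ => hne i hi, fun N hN => ?_⟩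
  · refine infinite_range_of_forall_eventually_cofinite_ne fun i => ?_
    obtain ⟨x, hx⟩ := DFunLike.ne_iff.1 (hne i)
    filter_upwards [(hf x).eventually_ne hx.symm] with j hj heq
    exact hj (by rw [heq])
  · have hlim : Tendsto f cofinite (@nhds _ (pointwiseTopology X) 0) :=
      tendsto_pointwiseTopology_iff.2 hf
    exact finite_setOf_mem_range_not_of_eventually_cofinite (hlim hN)

lemma GammaPZero.tendsto_apply {A : Set C(X, ℝ)} (h : GammaPZero X A) {ι : Type*}
    {f : ι → C(X, ℝ)} (hf : Function.Injective f) (hmem : ∀ i, f i ∈ A) (x : X) :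
    Tendsto (f · x) cofinite (𝓝 0) := by
  have hlim : Tendsto f cofinite (@nhds _ (pointwiseTopology X) 0) := fun N hN =>
    eventually_cofinite_of_finite_setOf_mem_not hf hmem (h.2.2 N hN)
  exact tendsto_pointwiseTopology_iff.1 hlim x

lemma zero_mem_closure_iff_forall_isCompact {E : Type*} [SeminormedAddCommGroup E]
    {A : Set C(X, E)} :
    0 ∈ closure A ↔ ∀ ε > 0, ∀ K : Set X, IsCompact K → ∃ f ∈ A, ∀ x ∈ K, ‖f x‖ < ε := by
  have hbasis := (Metric.nhds_basis_ball (x := (0 : E))).nhds_continuousMapConst (X := X)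
  rw [show (0 : C(X, E)) = ContinuousMap.const X 0 from rfl, mem_closure_iff_nhds_basis hbasis]
  simp only [MapsTo, Prod.forall, mem_ofPred_eq, Metric.mem_ball, dist_zero_right, and_imp]
  exact ⟨fun h ε hε K hK => h K ε hK hε, fun h K ε hK hε => h ε hε K hK⟩

lemma isKFamily_image_norm_lt {E : Type*} [SeminormedAddCommGroup E] {A : Set C(X, E)}
    (hA : 0 ∈ closure A) {ε : ℝ} (hε : 0 < ε) :
    IsKFamily ((fun f : C(X, E) => {x | ‖f x‖ < ε}) '' A) := by
  refine ⟨?_, fun K hK => ?_⟩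
  · rintro _ ⟨f, -, rfl⟩
    exact isOpen_lt (map_continuous f).norm continuous_const
  · obtain ⟨f, hf, hfK⟩ := zero_mem_closure_iff_forall_isCompact.1 hA ε hε K hK
    exact ⟨_, mem_image_of_mem _ hf, hfK⟩

/-- The functions with maximum `c` that are equal to `c` off some member of `𝒰`. They turn a cover
into a set of functions; fixing the maximum makes the sets for different `c` disjoint. -/
def plateauFunctions (𝒰 : Set (Set X)) (c : ℝ) : Set C(X, ℝ) :=
  {f | IsGreatest (range f) c ∧ ∃ U ∈ 𝒰, ∀ x ∉ U, f x = c}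

lemma exists_continuousMap_zero_one_of_isCompact [CompletelyRegularSpace X] {K U : Set X}
    (hK : IsCompact K) (hU : IsOpen U) (hKU : K ⊆ U) :
    ∃ f : C(X, ℝ), EqOn f 0 K ∧ EqOn f 1 Uᶜ ∧ ∀ x, f x ∈ Icc (0 : ℝ) 1 := by
  -- `X` need not be normal, so Urysohn's lemma is applied in its Stone–Čech compactification.
  obtain ⟨V, hV, rfl⟩ := (isInducing_stoneCechUnit (X := X)).isOpen_iff.1 hU
  obtain ⟨f, hf0, hf1, hf⟩ := exists_continuous_zero_one_of_isClosed
    (hK.image continuous_stoneCechUnit).isClosed hV.isClosed_compl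
    (disjoint_compl_right_iff_subset.2 (image_subset_iff.2 hKU))
  exact ⟨f.comp ⟨stoneCechUnit, continuous_stoneCechUnit⟩,
    fun x hx => hf0 (mem_image_of_mem _ hx), fun _ hx => hf1 hx, fun _ => hf _⟩

lemma IsKCover.omegaKZero_plateauFunctions [CompletelyRegularSpace X] {𝒰 : Set (Set X)}
    (h : IsKCover 𝒰) {c : ℝ} (hc : 0 < c) : OmegaKZero X (plateauFunctions 𝒰 c) := by
  obtain ⟨⟨hopen, hcompact⟩, huniv⟩ := isKCover_iff_s13.1 h
  refine ⟨?_, zero_mem_closure_iff_forall_isCompact.2 fun ε hε K hK => ?_⟩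
  · rintro ⟨⟨⟨_, hx⟩, -⟩, -⟩
    exact hc.ne hx
  · obtain ⟨U, hU, hKU⟩ := hcompact K hK
    obtain ⟨f, hf0, hf1, hf⟩ := exists_continuousMap_zero_one_of_isCompact hK (hopen U hU) hKU
    have hplateau : ∀ x ∉ U, (c • f) x = c := fun x hx => by simp [hf1 hx]
    have hle : ∀ x, (c • f) x ≤ c := fun x => mul_le_of_le_one_right hc.le (hf x).2
    obtain ⟨y, hy⟩ := (ne_univ_iff_exists_notMem U).1 (ne_of_mem_of_not_mem hU huniv)
    refine ⟨c • f, ⟨⟨⟨y, hplateau y hy⟩, forall_mem_range.2 hle⟩, U, hU, hplateau⟩, fun x hx => ?_⟩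
    simpa [hf0 hx] using hε

end FunctionSpaces

section Equivalence

variable {X : Type u} [TopologicalSpace X]

lemma s1sel_isKCover_isGammaCover_of_s1sel_omegaKZero_gammaPZero [CompletelyRegularSpace X]
    (h : S1sel {A : Set C(X, ℝ) | OmegaKZero X A} {A : Set C(X, ℝ) | GammaPZero X A}) :
    S1sel {𝒰 : Set (Set X) | IsKCover 𝒰} {𝒰 : Set (Set X) | IsGammaCover 𝒰} := by
  intro 𝒰 h𝒰
  obtain ⟨f, hf, hfΓ⟩ := h (fun n => plateauFunctions (𝒰 n) (n + 1))
    fun n => (h𝒰 n).omegaKZero_plateauFunctions n.cast_add_one_pos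
  choose hmax U hU hfU using hf
  have hinj : Function.Injective f := fun m n hmn => by
    exact_mod_cast add_right_cancel ((hmax m).unique (hmn ▸ hmax n))
  have hne : ∀ n, U n ≠ univ := fun n => ne_of_mem_of_not_mem (hU n) (isKCover_iff_s13.1 (h𝒰 n)).2
  refine ⟨U, hU, isGammaCover_range (fun n => (h𝒰 n).1 _ (hU n)) hne fun x => ?_⟩
  filter_upwards [(hfΓ.tendsto_apply hinj mem_range_self x).eventually_lt_const one_pos] with n hn
  by_contra hx
  rw [hfU n x hx] at hn
  linarith [n.cast_nonneg (α := ℝ)]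

lemma s1sel_omegaKZero_gammaPZero_of_s1sel_isKCover_isGammaCover
    (h : S1sel {𝒰 : Set (Set X) | IsKCover 𝒰} {𝒰 : Set (Set X) | IsGammaCover 𝒰}) :
    S1sel {A : Set C(X, ℝ) | OmegaKZero X A} {A : Set C(X, ℝ) | GammaPZero X A} := by
  intro A hA
  obtain ⟨U, hU, hxU⟩ := h.exists_eventually_mem_of_isKFamily
    fun n => isKFamily_image_norm_lt (hA n).2 (Nat.one_div_pos_of_nat (n := n))
  choose f hf hfU using hU
  refine ⟨f, hf, gammaPZero_range (fun n => ne_of_mem_of_not_mem (hf n) (hA n).1) fun x => ?_⟩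
  have hbound : ∀ᶠ n in cofinite, ‖f n x‖ ≤ 1 / ((n : ℝ) + 1) := by
    filter_upwards [hxU x] with n hn
    rw [← hfU n] at hn
    exact le_of_lt hn
  rw [Nat.cofinite_eq_atTop] at hbound ⊢
  exact squeeze_zero_norm' hbound tendsto_one_div_add_atTop_nhds_zero_nat

end Equivalence

theorem statement13_general (X : Type u) [TopologicalSpace X] [CompletelyRegularSpace X] :
    S1sel {A : Set C(X, ℝ) | OmegaKZero X A} {A : Set C(X, ℝ) | GammaPZero X A} ↔
    S1sel {𝒰 : Set (Set X) | IsKCover 𝒰} {𝒰 : Set (Set X) | IsGammaCover 𝒰} :=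
  ⟨s1sel_isKCover_isGammaCover_of_s1sel_omegaKZero_gammaPZero,
    s1sel_omegaKZero_gammaPZero_of_s1sel_isKCover_isGammaCover⟩

theorem statement13 (X : Type u) [TopologicalSpace X] [T35Space X] :
    S1sel {A : Set C(X, ℝ) | OmegaKZero X A} {A : Set C(X, ℝ) | GammaPZero X A} ↔
    S1sel {𝒰 : Set (Set X) | IsKCover 𝒰} {𝒰 : Set (Set X) | IsGammaCover 𝒰} :=
  statement13_general X
end
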